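/- arXiv:2310.09654 — 2 statements merged into one kernel-verified Lean document; each statement's English description precedes it below -/
import Mathlib

section
/- Let β > 0, and let j ≥ 1, ℓ ≥ 1 be integers and t ≥ 0. Then for every real number b ≥ 0 the nested integral satisfies ∫₀^t ∫₀^{s_ℓ} ⋯ ∫₀^{s_2} e^{-β(s_2+⋯+s_ℓ)} e^{β(j+ℓ-1)s_1} ds_1 ⋯ ds_ℓ ≤ e^{β(j+b)t} · β^{-ℓ} · Π_{i=0}^{ℓ-1} 1/(j+i+b). -/
open MeasureTheory

/-- The nested integral `∫₀^t ∫₀^{s_ℓ} ⋯ ∫₀^{s_2} e^{-β(s_2+⋯+s_ℓ)} e^{a s_1} ds_1 ⋯ ds_ℓ`,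
defined recursively in the number `ℓ` of integrations. -/
noncomputable def nestInt (β a : ℝ) : ℕ → ℝ → ℝ
  | 0, _ => 1
  | 1, t => ∫ s in (0:ℝ)..t, Real.exp (a * s)
  | (n + 2), t => ∫ s in (0:ℝ)..t, Real.exp (-β * s) * nestInt β a (n + 1) s

/-- The iterated exponential integral
`I^ℓ_j(t) = β^ℓ ((j+ℓ-1)!/(j-1)!) e^{-βjt} ∫₀^t ∫₀^{s_ℓ} ⋯ ∫₀^{s_2}
e^{-β(s_2+⋯+s_ℓ)} e^{β(j+ℓ-1)s_1} ds_1 ⋯ ds_ℓ`, with `I^0_j(t) = 1`. -/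
noncomputable def Iex (β : ℝ) (j ℓ : ℕ) (t : ℝ) : ℝ :=
  if ℓ = 0 then 1
  else β ^ ℓ * ((Nat.factorial (j + ℓ - 1) : ℝ) / (Nat.factorial (j - 1) : ℝ)) *
    Real.exp (-(β * j * t)) * nestInt β (β * ((j : ℝ) + (ℓ : ℝ) - 1)) ℓ t

theorem nestInt_cont (β a : ℝ) (n : ℕ) : Continuous (nestInt β a (n + 1)) := by
  induction n with
  | zero =>
    have : nestInt β a (0 + 1) = fun t => ∫ s in (0:ℝ)..t, Real.exp (a * s) := by
      funext t; simp only [nestInt]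
    rw [this]
    exact intervalIntegral.continuous_primitive
      (fun x y => Continuous.intervalIntegrable (by fun_prop) x y) 0
  | succ n ih =>
    have : nestInt β a (n + 1 + 1) =
        fun t => ∫ s in (0:ℝ)..t, Real.exp (-β * s) * nestInt β a (n + 1) s := by
      funext t; simp only [nestInt]
    rw [this]
    exact intervalIntegral.continuous_primitive
      (fun x y => Continuous.intervalIntegrable (by fun_prop) x y) 0

theorem exp_int_le (c t : ℝ) (hc : 0 < c) :
    ∫ s in (0:ℝ)..t, Real.exp (c * s) ≤ Real.exp (c * t) * c⁻¹ := by
  rw [intervalIntegral.integral_comp_mul_left (fun x => Real.exp x) hc.ne', integral_exp]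
  have : 0 < c⁻¹ := inv_pos.mpr hc
  simp only [mul_zero, Real.exp_zero, smul_eq_mul]
  nlinarith

theorem nestInt_bound_aux (β : ℝ) (hβ : 0 < β) (b : ℝ) (hb : 0 ≤ b) (n : ℕ) :
    ∀ (j : ℕ), 1 ≤ j → ∀ t : ℝ, 0 ≤ t →
    nestInt β (β * ((j : ℝ) + ((n + 1 : ℕ) : ℝ) - 1)) (n + 1) t
      ≤ Real.exp (β * ((j : ℝ) + b) * t) * (β ^ (n + 1))⁻¹ *
        ∏ i ∈ Finset.range (n + 1), 1 / ((j : ℝ) + (i : ℝ) + b) := by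
  induction n with
  | zero =>
    intro j hj t ht
    have hj' : (1 : ℝ) ≤ j := by exact_mod_cast hj
    have hc : 0 < β * ((j : ℝ) + b) := by positivity
    have h1 : nestInt β (β * ((j : ℝ) + ((0 + 1 : ℕ) : ℝ) - 1)) (0 + 1) t
        ≤ ∫ s in (0:ℝ)..t, Real.exp (β * ((j : ℝ) + b) * s) := by
      simp only [nestInt]
      apply intervalIntegral.integral_mono_on ht
      · exact Continuous.intervalIntegrable (by fun_prop) _ _
      · exact Continuous.intervalIntegrable (by fun_prop) _ _
      · intro s hs
        apply Real.exp_le_exp.mpr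
        apply mul_le_mul_of_nonneg_right _ hs.1
        apply mul_le_mul_of_nonneg_left _ hβ.le
        push_cast
        linarith
    refine (h1.trans (exp_int_le _ t hc)).trans (le_of_eq ?_)
    simp [mul_assoc]
    ring
  | succ n ih =>
    intro j hj t ht
    have hj' : (1 : ℝ) ≤ j := by exact_mod_cast hj
    have hc : 0 < β * ((j : ℝ) + b) := by positivity
    set C : ℝ := (β ^ (n + 1))⁻¹ *
      ∏ i ∈ Finset.range (n + 1), 1 / (((j + 1 : ℕ) : ℝ) + (i : ℝ) + b) with hC
    have hC0 : 0 ≤ C := by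
      apply mul_nonneg (by positivity)
      exact Finset.prod_nonneg fun i _ => by positivity
    have ha : β * ((j : ℝ) + ((n + 1 + 1 : ℕ) : ℝ) - 1)
        = β * (((j + 1 : ℕ) : ℝ) + ((n + 1 : ℕ) : ℝ) - 1) := by
      push_cast; ring
    have h1 : nestInt β (β * ((j : ℝ) + ((n + 1 + 1 : ℕ) : ℝ) - 1)) (n + 1 + 1) t
        ≤ ∫ s in (0:ℝ)..t, Real.exp (β * ((j : ℝ) + b) * s) * C := by
      rw [ha]
      simp only [nestInt]
      apply intervalIntegral.integral_mono_on ht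
      · have := nestInt_cont β (β * (((j + 1 : ℕ) : ℝ) + ((n + 1 : ℕ) : ℝ) - 1)) n
        exact Continuous.intervalIntegrable (by fun_prop) _ _
      · exact Continuous.intervalIntegrable (by fun_prop) _ _
      · intro s hs
        have h2 := mul_le_mul_of_nonneg_left (ih (j + 1) (by omega) s hs.1)
          (Real.exp_pos (-β * s)).le
        refine h2.trans (le_of_eq ?_)
        rw [mul_assoc (Real.exp _) _ (∏ i ∈ _, _), ← hC, ← mul_assoc, ← Real.exp_add]
        congr 2
        push_cast; ring
    refine h1.trans ?_
    rw [intervalIntegral.integral_mul_const]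
    refine (mul_le_mul_of_nonneg_right (exp_int_le _ t hc) hC0).trans (le_of_eq ?_)
    rw [Finset.prod_range_succ' _ (n + 1), hC]
    have hp : ∏ i ∈ Finset.range (n + 1), 1 / (((j + 1 : ℕ) : ℝ) + (i : ℝ) + b)
        = ∏ i ∈ Finset.range (n + 1), 1 / ((j : ℝ) + ((i + 1 : ℕ) : ℝ) + b) := by
      apply Finset.prod_congr rfl
      intro i _
      push_cast
      congr 1
      ring
    rw [hp, pow_succ β (n + 1), mul_inv, mul_inv, Nat.cast_zero, add_zero, one_div ((j : ℝ) + b)]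
    ring

/-- Bound on the nested integral: for every real `b ≥ 0`,
`∫₀^t ⋯ ∫₀^{s_2} e^{-β(s_2+⋯+s_ℓ)} e^{β(j+ℓ-1)s_1} ds_1 ⋯ ds_ℓ
  ≤ e^{β(j+b)t} β^{-ℓ} Π_{i=0}^{ℓ-1} 1/(j+i+b)`. -/
theorem nestInt_bound (β : ℝ) (hβ : 0 < β) (j ℓ : ℕ) (hj : 1 ≤ j) (hℓ : 1 ≤ ℓ)
    (t : ℝ) (ht : 0 ≤ t) (b : ℝ) (hb : 0 ≤ b) :
    nestInt β (β * ((j : ℝ) + (ℓ : ℝ) - 1)) ℓ t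
      ≤ Real.exp (β * ((j : ℝ) + b) * t) * (β ^ ℓ)⁻¹ *
        ∏ i ∈ Finset.range ℓ, 1 / ((j : ℝ) + (i : ℝ) + b) := by
  obtain ⟨n, rfl⟩ : ∃ n, ℓ = n + 1 := ⟨ℓ - 1, by omega⟩
  exact nestInt_bound_aux β hβ b hb n j hj t ht
end

section
/- Let β > 0, let (x_k)_{k≥1} be nonnegative differentiable functions on [0,∞) with x_k(0) = 0, and let (r_k)_{k≥1}, (α_k)_{k≥1} be constants with r_k ≥ 0 and α_k > 0, such that for every k ≥ 1 and every t ≥ 0 one has x_k'(t) ≤ β·k·(α_k·x_{k+1}(t) − x_k(t)) + r_k. Then for all integers j ≥ 1, ℓ ≥ 1 and all 0 ≤ t₀ ≤ t: x_j(t) ≤ A^ℓ_j · I^ℓ_j(t−t₀) · sup_{s ∈ [t₀,t]} x_{j+ℓ}(s) + Σ_{k=1}^{ℓ} A^ℓ_j · I^k_{j+ℓ−k}(t₀) · I^{ℓ−k}_j(t−t₀) · sup_{s ∈ [0,t₀]} x_{j+ℓ}(s) + (1/β) · Σ_{k=0}^{ℓ-1} A^{k+1}_j · I^{k+1}_j(t)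 · r_{j+k} / (α_{j+k}·(j+k)), where A^k_j := Π_{i=j}^{j+k-1} α_i (with A^0_j := 1). -/
open MeasureTheory

lemma nestInt_hasDerivAt_cont (β a : ℝ) (n : ℕ) : Continuous (nestInt β a n) := by
  induction n with
  | zero => 
    have : nestInt β a 0 = fun _ => 1 := by funext t; simp [nestInt]
    rw [this]; exact continuous_const
  | succ n ih =>
    rcases n with _ | n
    · have : nestInt β a (0+1) = fun t => ∫ s in (0:ℝ)..t, Real.exp (a * s) := by
        funext t; simp [nestInt]
      rw [this]
      exact intervalIntegral.continuous_primitive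
        (fun u v => (by fun_prop : Continuous fun s => Real.exp (a * s)).intervalIntegrable u v) 0
    · have : nestInt β a (n+1+1) = fun t => ∫ s in (0:ℝ)..t, Real.exp (-β * s) * nestInt β a (n + 1) s := by
        funext t; simp [nestInt]
      rw [this]
      exact intervalIntegral.continuous_primitive
        (fun u v => (by fun_prop : Continuous fun s => Real.exp (-β * s) * nestInt β a (n + 1) s).intervalIntegrable u v) 0

lemma nestInt_one_deriv (β a t : ℝ) : HasDerivAt (nestInt β a 1) (Real.exp (a * t)) t := by
  have : nestInt β a 1 = fun t => ∫ s in (0:ℝ)..t, Real.exp (a * s) := by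
    funext t; simp [nestInt]
  rw [this]
  exact (by fun_prop : Continuous fun s => Real.exp (a * s)).integral_hasStrictDerivAt 0 t |>.hasDerivAt

lemma nestInt_two_deriv (β a t : ℝ) (n : ℕ) :
    HasDerivAt (nestInt β a (n+2)) (Real.exp (-β * t) * nestInt β a (n + 1) t) t := by
  have : nestInt β a (n+2) = fun t => ∫ s in (0:ℝ)..t, Real.exp (-β * s) * nestInt β a (n + 1) s := by
    funext t; simp [nestInt]
  rw [this]
  have hc := nestInt_hasDerivAt_cont β a (n+1)
  exact (by fun_prop : Continuous fun s => Real.exp (-β * s) * nestInt β a (n + 1) s).integral_hasStrictDerivAt 0 t |>.hasDerivAt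

lemma nestInt_nonneg (β a : ℝ) (n : ℕ) : ∀ t, 0 ≤ t → 0 ≤ nestInt β a n t := by
  induction n with
  | zero => intro t _; simp [nestInt]
  | succ n ih =>
    intro t ht
    rcases n with _ | n
    · simp only [nestInt]
      exact intervalIntegral.integral_nonneg ht (fun u _ => (Real.exp_pos _).le)
    · simp only [nestInt]
      exact intervalIntegral.integral_nonneg ht
        (fun u hu => mul_nonneg (Real.exp_pos _).le (ih u hu.1))

lemma nestInt_succ_zero (β a : ℝ) (n : ℕ) : nestInt β a (n+1) 0 = 0 := by
  rcases n with _ | n <;> simp [nestInt]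

lemma Iex_zero (β : ℝ) (j : ℕ) (t : ℝ) : Iex β j 0 t = 1 := by simp [Iex]

lemma Iex_succ (β : ℝ) (j ℓ : ℕ) (t : ℝ) : Iex β j (ℓ+1) t =
    β ^ (ℓ+1) * ((Nat.factorial (j + ℓ) : ℝ) / (Nat.factorial (j - 1) : ℝ)) *
    Real.exp (-(β * j * t)) * nestInt β (β * ((j : ℝ) + (ℓ : ℝ))) (ℓ+1) t := by
  have h : (j:ℝ) + ((ℓ+1 : ℕ) : ℝ) - 1 = j + ℓ := by push_cast; ring
  simp only [Iex, h]
  simp [← add_assoc]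

lemma Iex_at_zero (β : ℝ) (j ℓ : ℕ) : Iex β j (ℓ+1) 0 = 0 := by
  rw [Iex_succ, nestInt_succ_zero, mul_zero]

lemma Iex_nonneg (β : ℝ) (hβ : 0 < β) (j ℓ : ℕ) (t : ℝ) (ht : 0 ≤ t) : 0 ≤ Iex β j ℓ t := by
  rcases ℓ with _ | ℓ
  · simp [Iex_zero]
  · rw [Iex_succ]
    have := nestInt_nonneg β (β * ((j : ℝ) + (ℓ : ℝ))) (ℓ+1) t ht
    positivity

lemma Iex_deriv (β : ℝ) (j ℓ : ℕ) (hj : 1 ≤ j) (t : ℝ) :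
    HasDerivAt (Iex β j (ℓ+1)) (β * j * (Iex β (j+1) ℓ t - Iex β j (ℓ+1) t)) t := by
  obtain ⟨i, rfl⟩ : ∃ i, j = i + 1 := ⟨j - 1, by omega⟩
  have hf : Iex β (i+1) (ℓ+1) = fun t => β ^ (ℓ+1) * ((Nat.factorial (i + 1 + ℓ) : ℝ) /
      (Nat.factorial i : ℝ)) *
    Real.exp (-(β * (i+1 : ℕ) * t)) * nestInt β (β * (((i+1 : ℕ) : ℝ) + (ℓ : ℝ))) (ℓ+1) t := by
    funext t; rw [Iex_succ]; simp
  have he : HasDerivAt (fun t : ℝ => Real.exp (-(β * (i+1 : ℕ) * t)))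
      (Real.exp (-(β * (i+1 : ℕ) * t)) * (-(β * (i+1 : ℕ)))) t := by
    have := (((hasDerivAt_id t).const_mul (β * (i+1 : ℕ))).neg).exp
    simpa using this
  have hfac : ((Nat.factorial (i+1) : ℕ) : ℝ) = (i+1) * (Nat.factorial i : ℝ) := by
    rw [Nat.factorial_succ]; push_cast; ring
  have hne : (Nat.factorial i : ℝ) ≠ 0 := by positivity
  have hi : (i : ℝ) + 1 ≠ 0 := by positivity
  rcases ℓ with _ | ℓ
  · rw [hf]
    refine ((he.const_mul _).mul (nestInt_one_deriv _ _ t)).congr_deriv ?_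
    rw [Iex_zero]
    have h2 : Real.exp (-(β * (i+1 : ℕ) * t)) * Real.exp (β * (((i+1 : ℕ) : ℝ) + ((0:ℕ) : ℝ)) * t) = 1 := by
      rw [← Real.exp_add]; simp
    rw [mul_assoc (β ^ (0+1) * _) _ (Real.exp (β * (((i+1 : ℕ) : ℝ) + ((0:ℕ) : ℝ)) * t)), h2]
    simp only [add_zero, hfac, zero_add]
    push_cast
    field_simp
    ring
  · rw [hf]
    refine ((he.const_mul _).mul (nestInt_two_deriv _ _ t ℓ)).congr_deriv ?_
    rw [Iex_succ]
    have h3 : (((i+1+1 : ℕ) : ℝ) + (ℓ : ℝ)) = (((i+1 : ℕ) : ℝ) + ((ℓ+1 : ℕ) : ℝ)) := by push_cast; ring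
    have h2 : Real.exp (-(β * (i+1+1 : ℕ) * t)) = Real.exp (-(β * (i+1 : ℕ) * t)) * Real.exp (-β * t) := by
      rw [← Real.exp_add]; congr 1; push_cast; ring
    have h4 : i + 1 + 1 + ℓ = i + 1 + (ℓ + 1) := by omega
    rw [h3, h2, h4, Nat.add_sub_cancel, hfac]
    beta_reduce
    generalize nestInt β _ (ℓ+1) t = X
    generalize nestInt β _ (ℓ+1+1) t = Y
    push_cast
    field_simp
    ring

noncomputable def AA (α : ℕ → ℝ) (j ℓ : ℕ) : ℝ := ∏ i ∈ Finset.range ℓ, α (j + i)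

lemma AA_succ (α : ℕ → ℝ) (j ℓ : ℕ) : AA α j (ℓ+1) = α j * AA α (j+1) ℓ := by
  unfold AA
  rw [Finset.prod_range_succ', mul_comm]
  simp only [add_zero]
  congr 1
  exact Finset.prod_congr rfl fun i _ => by congr 1; omega

lemma AA_nonneg (α : ℕ → ℝ) (hα : ∀ k, 1 ≤ k → 0 < α k) (j ℓ : ℕ) (hj : 1 ≤ j) : 0 ≤ AA α j ℓ :=
  Finset.prod_nonneg fun i _ => (hα _ (by omega)).le

noncomputable def SS (β : ℝ) (α : ℕ → ℝ) (t₀ : ℝ) (j ℓ : ℕ) (s : ℝ) : ℝ :=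
  ∑ k ∈ Finset.Icc 1 ℓ, AA α j ℓ * Iex β (j + ℓ - k) k t₀ * Iex β j (ℓ - k) (s - t₀)

noncomputable def RR (β : ℝ) (r α : ℕ → ℝ) (j ℓ : ℕ) (s : ℝ) : ℝ :=
  (1 / β) * ∑ k ∈ Finset.range ℓ, AA α j (k+1) * Iex β j (k + 1) s *
            (r (j + k) / (α (j + k) * ((j : ℝ) + k)))

lemma Iex_deriv_shift (β : ℝ) (j ℓ : ℕ) (hj : 1 ≤ j) (t₀ t : ℝ) :
    HasDerivAt (fun s => Iex β j (ℓ+1) (s - t₀))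
      (β * j * (Iex β (j+1) ℓ (t - t₀) - Iex β j (ℓ+1) (t - t₀))) t := by
  exact (Iex_deriv β j ℓ hj (t - t₀)).comp_sub_const t t₀

lemma SS_deriv (β : ℝ) (α : ℕ → ℝ) (t₀ : ℝ) (j ℓ : ℕ) (hj : 1 ≤ j) (s : ℝ) :
    HasDerivAt (SS β α t₀ j (ℓ+1)) (β * j * (α j * SS β α t₀ (j+1) ℓ s - SS β α t₀ j (ℓ+1) s +
      AA α j (ℓ+1) * Iex β j (ℓ+1) t₀)) s := by
  have hS : SS β α t₀ j (ℓ+1) = fun s => (∑ k ∈ Finset.Icc 1 ℓ,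
      α j * AA α (j+1) ℓ * Iex β (j + 1 + ℓ - k) k t₀ * Iex β j (ℓ - k + 1) (s - t₀)) +
      AA α j (ℓ+1) * Iex β j (ℓ+1) t₀ := by
    funext s
    unfold SS
    rw [Finset.sum_Icc_succ_top (by omega)]
    congr 1
    · refine Finset.sum_congr rfl fun k hk => ?_
      rw [Finset.mem_Icc] at hk
      rw [AA_succ, show j + (ℓ+1) - k = j + 1 + ℓ - k by omega, show ℓ + 1 - k = ℓ - k + 1 by omega]
    · rw [show j + (ℓ+1) - (ℓ + 1) = j by omega, Nat.sub_self, Iex_zero, mul_one]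
  rw [hS]
  have h := (HasDerivAt.fun_sum (u := Finset.Icc 1 ℓ) (x := s) fun k _ =>
    (Iex_deriv_shift β j (ℓ - k) hj t₀ s).const_mul 
      (α j * AA α (j+1) ℓ * Iex β (j + 1 + ℓ - k) k t₀)).add_const (AA α j (ℓ+1) * Iex β j (ℓ+1) t₀)
  refine h.congr_deriv ?_
  unfold SS
  simp only [Finset.mul_sum, mul_sub, mul_add, Finset.sum_sub_distrib]
  have e1 : ∀ a b c d: ℝ, a = b → c = d → a - c = b - (d + β * j * (AA α j (ℓ+1) * Iex β j (ℓ+1) t₀)) +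
     β * j * (AA α j (ℓ+1) * Iex β j (ℓ+1) t₀) := by
    intro a b c d h1 h2; rw [h1, h2]; ring
  apply e1
  · exact Finset.sum_congr rfl fun k _ => by ring
  · exact Finset.sum_congr rfl fun k _ => by ring

lemma RR_deriv (β : ℝ) (hβ : 0 < β) (r α : ℕ → ℝ) (hα : ∀ k, 1 ≤ k → 0 < α k)
    (j ℓ : ℕ) (hj : 1 ≤ j) (s : ℝ) :
    HasDerivAt (RR β r α j (ℓ+1))
      (β * j * (α j * RR β r α (j+1) ℓ s - RR β r α j (ℓ+1) s) + r j) s := by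
  have h := (HasDerivAt.fun_sum (u := Finset.range (ℓ+1)) (x := s) fun k _ =>
    ((Iex_deriv β j k hj s).const_mul (AA α j (k+1))).mul_const
      (r (j + k) / (α (j + k) * ((j : ℝ) + k)))).const_mul (1/β)
  have hR : RR β r α j (ℓ+1) = fun s => (1 / β) * ∑ k ∈ Finset.range (ℓ+1),
    AA α j (k+1) * Iex β j (k + 1) s * (r (j + k) / (α (j + k) * ((j : ℝ) + k))) := rfl
  have key : ∑ k ∈ Finset.range (ℓ+1), AA α j (k+1) * (β * j * (Iex β (j+1) k s - Iex β j (k+1) s)) *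
      (r (j + k) / (α (j + k) * ((j : ℝ) + k))) =
      β * j * (α j * ∑ k ∈ Finset.range ℓ, AA α (j+1) (k+1) * Iex β (j+1) (k + 1) s *
            (r (j + 1 + k) / (α (j + 1 + k) * (((j + 1 : ℕ) : ℝ) + k)))) + β * r j
      - β * j * ∑ k ∈ Finset.range (ℓ+1), AA α j (k+1) * Iex β j (k + 1) s *
            (r (j + k) / (α (j + k) * ((j : ℝ) + k))) := by
    have h1 : ∑ k ∈ Finset.range (ℓ+1), AA α j (k+1) * (β * j * (Iex β (j+1) k s - Iex β j (k+1) s)) *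
      (r (j + k) / (α (j + k) * ((j : ℝ) + k))) =
       ∑ k ∈ Finset.range (ℓ+1), β * j * (AA α j (k+1) * Iex β (j+1) k s * (r (j + k) / (α (j + k) * ((j : ℝ) + k))))
       - β * j * ∑ k ∈ Finset.range (ℓ+1), AA α j (k+1) * Iex β j (k + 1) s *
            (r (j + k) / (α (j + k) * ((j : ℝ) + k))) := by
      rw [Finset.mul_sum, ← Finset.sum_sub_distrib]
      exact Finset.sum_congr rfl fun k _ => by ring
    rw [h1, Finset.sum_range_succ']
    congr 2
    · simp only [Finset.mul_sum]
      refine Finset.sum_congr rfl fun k _ => ?_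
      rw [AA_succ, show j + (k+1) = j + 1 + k by omega]
      push_cast
      rw [show (j:ℝ) + (k + 1) = j + 1 + k by ring]
      ring
    · have : α j ≠ 0 := (hα j hj).ne'
      have hj' : (j:ℝ) ≠ 0 := by positivity
      simp [Iex_zero, AA]
      field_simp
  rw [hR]
  refine h.congr_deriv ?_
  rw [key]
  unfold RR
  beta_reduce
  generalize (∑ k ∈ Finset.range ℓ, _ : ℝ) = X
  generalize (∑ k ∈ Finset.range (ℓ+1), _ : ℝ) = Y
  field_simp
  ring

lemma SS_start (β : ℝ) (α : ℕ → ℝ) (t₀ : ℝ) (j ℓ : ℕ) :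
    SS β α t₀ j (ℓ+1) t₀ = AA α j (ℓ+1) * Iex β j (ℓ+1) t₀ := by
  unfold SS
  rw [Finset.sum_Icc_succ_top (by omega), Finset.sum_eq_zero, zero_add,
    show j + (ℓ+1) - (ℓ + 1) = j by omega, Nat.sub_self, Iex_zero, mul_one]
  intro k hk
  rw [Finset.mem_Icc] at hk
  rw [show ℓ + 1 - k = ℓ - k + 1 by omega, sub_self, Iex_at_zero, mul_zero]

lemma RR_at_zero (β : ℝ) (r α : ℕ → ℝ) (j ℓ : ℕ) : RR β r α j ℓ 0 = 0 := by
  simp [RR, Iex_at_zero]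

lemma step_bound (β : ℝ) (hβ : 0 < β) (x x' : ℕ → ℝ → ℝ) (r α : ℕ → ℝ)
    (hα : ∀ k, 1 ≤ k → 0 < α k)
    (hderiv : ∀ k, 1 ≤ k → ∀ t : ℝ, 0 ≤ t → HasDerivWithinAt (x k) (x' k t) (Set.Ici 0) t)
    (hineq : ∀ k, 1 ≤ k → ∀ t : ℝ, 0 ≤ t →
      x' k t ≤ β * k * (α k * x (k + 1) t - x k t) + r k)
    (t₀ b M₀ M₁ : ℝ) (ht₀ : 0 ≤ t₀) (hM₀ : 0 ≤ M₀) (N : ℕ)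
    (hM₁ : ∀ s ∈ Set.Icc t₀ b, x N s ≤ M₁)
    (ℓ : ℕ) : ∀ j, 1 ≤ j → j + ℓ = N →
    (∀ k m, 1 ≤ k → k + (m + 1) = N →
      x k t₀ ≤ AA α k (m+1) * Iex β k (m+1) t₀ * M₀ + RR β r α k (m+1) t₀) →
    ∀ s ∈ Set.Icc t₀ b, x j s ≤ AA α j ℓ * Iex β j ℓ (s - t₀) * M₁ + SS β α t₀ j ℓ s * M₀
      + RR β r α j ℓ s := by
  induction ℓ with
  | zero =>
    intro j hj hN _ s hs
    have : j = N := by omega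
    subst this
    simpa [AA, Iex_zero, SS, RR] using hM₁ s hs
  | succ ℓ ih =>
    intro j hj hN hst s hs
    have IH := ih (j+1) (by omega) (by omega) hst
    set F : ℝ → ℝ := fun s => AA α j (ℓ+1) * Iex β j (ℓ+1) (s - t₀) * M₁ +
      SS β α t₀ j (ℓ+1) s * M₀ + RR β r α j (ℓ+1) s with hF
    have hFd := fun s => ((((Iex_deriv_shift β j ℓ hj t₀ s).const_mul (AA α j (ℓ+1))).mul_const M₁).add
      ((SS_deriv β α t₀ j ℓ hj s).mul_const M₀)).add (RR_deriv β hβ r α hα j ℓ hj s)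
    have he : ∀ s, HasDerivAt (fun s : ℝ => Real.exp (β * j * s)) (Real.exp (β * j * s) * (β * j)) s := by
      intro s
      simpa using ((hasDerivAt_id s).const_mul (β * j)).exp
    have hG : ∀ s ∈ Set.Icc t₀ b, HasDerivWithinAt (fun s => Real.exp (β * j * s) * (F s - x j s)) _ (Set.Icc t₀ b) s :=
      fun s hs => ((he s).hasDerivWithinAt).mul (((hFd s).hasDerivWithinAt).sub
        ((hderiv j hj s (ht₀.trans hs.1)).mono (fun u hu => ht₀.trans hu.1)))
    have hmono := monotoneOn_of_hasDerivWithinAt_nonneg (convex_Icc t₀ b)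
      (fun s hs => (hG s hs).continuousWithinAt)
      (fun s hs => (hG s (interior_subset hs)).mono interior_subset) (by
        intro s hs
        have hs := interior_subset hs
        have hI := IH s hs
        have hq := hineq j hj s (ht₀.trans hs.1)
        have hnn : 0 ≤ AA α j (ℓ+1) * Iex β j (ℓ+1) t₀ * M₀ :=
          mul_nonneg (mul_nonneg (AA_nonneg α hα j _ hj) (Iex_nonneg β hβ _ _ _ ht₀)) hM₀
        have hbj : 0 ≤ β * j := by positivity
        have h1 := mul_le_mul_of_nonneg_left hI (mul_nonneg hbj (hα j hj).le)
        have h2 := mul_nonneg hbj hnn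
        rw [mul_assoc, ← mul_add]
        refine mul_nonneg (Real.exp_pos _).le ?_
        simp only [hF, Pi.add_apply, Pi.sub_apply]
        rw [AA_succ] at *
        linarith)
    have h0 : t₀ ∈ Set.Icc t₀ b := ⟨le_rfl, hs.1.trans hs.2⟩
    have := hmono h0 hs hs.1
    have hstart : 0 ≤ F t₀ - x j t₀ := by
      have := hst j ℓ hj hN
      simp only [hF, sub_self, Iex_at_zero, SS_start]
      linarith
    have h3 : 0 ≤ Real.exp (β * j * s) * (F s - x j s) :=
      le_trans (mul_nonneg (Real.exp_pos _).le hstart) this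
    have h4 := (mul_nonneg_iff_of_pos_left (Real.exp_pos _)).1 h3
    simp only [hF] at h4
    linarith

/-- Gronwall-type estimate for the ODE hierarchy with an intermediate time `t₀`:
`x_j(t) ≤ A^ℓ_j I^ℓ_j(t−t₀) sup_{[t₀,t]} x_{j+ℓ}
  + Σ_{k=1}^{ℓ} A^ℓ_j I^k_{j+ℓ−k}(t₀) I^{ℓ−k}_j(t−t₀) sup_{[0,t₀]} x_{j+ℓ}
  + (1/β) Σ_{k=0}^{ℓ-1} A^{k+1}_j I^{k+1}_j(t) r_{j+k}/(α_{j+k}(j+k))`. -/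
theorem ode_hierarchy_bound_t0 (β : ℝ) (hβ : 0 < β) (x x' : ℕ → ℝ → ℝ) (r α : ℕ → ℝ)
    (hx0 : ∀ k, 1 ≤ k → x k 0 = 0)
    (hxnonneg : ∀ k, 1 ≤ k → ∀ t : ℝ, 0 ≤ t → 0 ≤ x k t)
    (hr : ∀ k, 1 ≤ k → 0 ≤ r k)
    (hα : ∀ k, 1 ≤ k → 0 < α k)
    (hderiv : ∀ k, 1 ≤ k → ∀ t : ℝ, 0 ≤ t → HasDerivWithinAt (x k) (x' k t) (Set.Ici 0) t)
    (hineq : ∀ k, 1 ≤ k → ∀ t : ℝ, 0 ≤ t →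
      x' k t ≤ β * k * (α k * x (k + 1) t - x k t) + r k)
    (j ℓ : ℕ) (hj : 1 ≤ j) (hℓ : 1 ≤ ℓ) (t₀ t : ℝ) (ht₀ : 0 ≤ t₀) (ht : t₀ ≤ t) :
    x j t ≤ (∏ i ∈ Finset.range ℓ, α (j + i)) * Iex β j ℓ (t - t₀) *
        sSup (x (j + ℓ) '' Set.Icc t₀ t)
      + (∑ k ∈ Finset.Icc 1 ℓ,
          (∏ i ∈ Finset.range ℓ, α (j + i)) * Iex β (j + ℓ - k) k t₀ *
            Iex β j (ℓ - k) (t - t₀)) * sSup (x (j + ℓ) '' Set.Icc 0 t₀)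
      + (1 / β) * ∑ k ∈ Finset.range ℓ,
          (∏ i ∈ Finset.range (k + 1), α (j + i)) * Iex β j (k + 1) t *
            (r (j + k) / (α (j + k) * ((j : ℝ) + k))) := by
  have hcont : ∀ k, 1 ≤ k → ContinuousOn (x k) (Set.Ici 0) :=
    fun k hk s hs => (hderiv k hk s hs).continuousWithinAt
  have hN : 1 ≤ j + ℓ := by omega
  have hb : ∀ a b, 0 ≤ a → ∀ s ∈ Set.Icc a b, x (j+ℓ) s ≤ sSup (x (j + ℓ) '' Set.Icc a b) := by
    intro a b ha s hs
    exact le_csSup (isCompact_Icc.bddAbove_image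
      ((hcont _ hN).mono fun u hu => ha.trans hu.1)) ⟨s, hs, rfl⟩
  have hM0 : 0 ≤ sSup (x (j + ℓ) '' Set.Icc 0 t₀) :=
    (hxnonneg _ hN 0 le_rfl).trans (hb 0 t₀ le_rfl 0 ⟨le_rfl, ht₀⟩)
  refine step_bound β hβ x x' r α hα hderiv hineq t₀ t _ _ ht₀ hM0 (j + ℓ) (hb t₀ t ht₀) ℓ j hj rfl
    ?_ t ⟨ht, le_rfl⟩
  intro k m hk hkm
  have h := step_bound β hβ x x' r α hα hderiv hineq 0 t₀ 0 _ le_rfl le_rfl (j + ℓ)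
    (hb 0 t₀ le_rfl) (m+1) k hk hkm (by
      intro k m hk _
      rw [hx0 k hk, RR_at_zero]; simp) t₀ ⟨ht₀, le_rfl⟩
  simpa using h
end
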